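/- Let d be a rational prime, m ≥ 2, and n, k ≥ 1. Then the resultant Res(G_{d,m,n}, G_{d,0,k}) equals ±d^{deg(G_{d,0,n})} if n = k, and equals ±1 if n ≠ k. -/

import Mathlib

open Polynomial

noncomputable section

/-- `critPoly d i` is `f_{c,d}^i(0)` as a polynomial in the variable `c` over `ℤ`,
where `f_{c,d}(x) = x^d + c`. -/
def critPoly (d : ℕ) : ℕ → Polynomial ℤ
  | 0 => 0
  | i + 1 => critPoly d i ^ d + X

/-- The field of rational functions in `c` over `ℚ`, realized as the fraction field of `ℤ[c]`. -/
abbrev RF : Type := FractionRing (Polynomial ℤ)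

/-- The natural inclusion `ℤ[c] → ℚ(c)`. -/
def toRF (p : Polynomial ℤ) : RF := algebraMap (Polynomial ℤ) RF p

/-- `G_{d,0,n} = ∏_{k ∣ n} (f_{c,d}^k(0))^{μ(n/k)}` as a rational function. -/
def G0Rat (d n : ℕ) : RF :=
  ∏ k ∈ n.divisors, toRF (critPoly d k) ^ (ArithmeticFunction.moebius (n / k))

/-- `F_{d,m,n}` as a rational function. -/
def FRat (d m n : ℕ) : RF :=
  ∏ k ∈ n.divisors,
    ((toRF (critPoly d (m + k)) - toRF (critPoly d m)) /
      (toRF (critPoly d (m - 1 + k)) - toRF (critPoly d (m - 1)))) ^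
      (ArithmeticFunction.moebius (n / k))

/-- `G_{d,m,n}` (for `m ≥ 2`) as a rational function. -/
def GRat (d m n : ℕ) : RF :=
  if n ∣ m - 1 then FRat d m n / FRat d 1 n else FRat d m n

/-- `G : ℤ[c]` is the Misiurewicz polynomial `G_{d,m,n}` (for `m ≥ 2`). -/
def IsMisiurewicz (d m n : ℕ) (G : Polynomial ℤ) : Prop := toRF G = GRat d m n

/-- `G0 : ℤ[c]` is the polynomial `G_{d,0,n}`. -/
def IsG0 (d n : ℕ) (G0 : Polynomial ℤ) : Prop := toRF G0 = G0Rat d n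

/-- The Sylvester matrix of two polynomials `f, g ∈ ℤ[x]`: the first `g.natDegree` rows
carry the coefficients of `f` and the remaining `f.natDegree` rows carry the
coefficients of `g`, each shifted one step to the right in successive rows. -/
def sylvesterMatrix (f g : Polynomial ℤ) :
    Matrix (Fin (f.natDegree + g.natDegree)) (Fin (f.natDegree + g.natDegree)) ℤ :=
  Matrix.of fun i j =>
    if (i : ℕ) < g.natDegree then
      if (i : ℕ) ≤ (j : ℕ) ∧ (j : ℕ) ≤ (i : ℕ) + f.natDegree then
        f.coeff (f.natDegree - ((j : ℕ) - (i : ℕ)))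
      else 0
    else
      if (i : ℕ) - g.natDegree ≤ (j : ℕ) ∧ (j : ℕ) ≤ ((i : ℕ) - g.natDegree) + g.natDegree then
        g.coeff (g.natDegree - ((j : ℕ) - ((i : ℕ) - g.natDegree)))
      else 0

/-- The resultant of two polynomials over `ℤ`, as the determinant of their Sylvester matrix. -/
def resultantZ (f g : Polynomial ℤ) : ℤ := (sylvesterMatrix f g).det

theorem resultantZ_eq (f g : ℤ[X]) : resultantZ f g = resultant f g := by
  unfold resultantZ resultant
  have h : sylvesterMatrix f g =
      ((sylvester f g f.natDegree g.natDegree).transpose).submatrix Fin.revPerm Fin.revPerm := by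
    ext i j
    rw [Matrix.submatrix_apply, Matrix.transpose_apply]
    unfold sylvesterMatrix sylvester
    rw [Matrix.of_apply, Matrix.of_apply]
    have hi := i.2
    have hj := j.2
    by_cases hlt : (i : ℕ) < g.natDegree
    · have hrev : (Fin.revPerm i) = Fin.natAdd f.natDegree
          (⟨g.natDegree - 1 - i, by omega⟩ : Fin g.natDegree) := by
        ext; simp [Fin.val_rev]; omega
      rw [if_pos hlt, hrev, Fin.addCases_right]
      simp only [Fin.revPerm_apply, Fin.val_rev, Set.mem_Icc]
      by_cases h1 : (i : ℕ) ≤ (j : ℕ) ∧ (j : ℕ) ≤ (i : ℕ) + f.natDegree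
      · rw [if_pos h1, if_pos (by omega)]
        congr 1; omega
      · rw [if_neg h1, if_neg (by omega)]
    · have hrev : (Fin.revPerm i) = Fin.castAdd g.natDegree
          (⟨f.natDegree + g.natDegree - 1 - i, by omega⟩ : Fin f.natDegree) := by
        ext; simp [Fin.val_rev]; omega
      rw [if_neg hlt, hrev, Fin.addCases_left]
      simp only [Fin.revPerm_apply, Fin.val_rev, Set.mem_Icc]
      by_cases h1 : (i : ℕ) - g.natDegree ≤ (j : ℕ) ∧
          (j : ℕ) ≤ ((i : ℕ) - g.natDegree) + g.natDegree
      · rw [if_pos h1, if_pos (by omega)]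
        congr 1; omega
      · rw [if_neg h1, if_neg (by omega)]
  rw [h, Matrix.det_submatrix_equiv_self, Matrix.det_transpose]

theorem resultant_deg_sign (f g : ℤ[X]) (hg : g.Monic) (N : ℕ) (hN : f.natDegree ≤ N) :
    ∃ e : ℤ, IsUnit e ∧ resultant f g N g.natDegree = e * resultant f g := by
  obtain ⟨k, rfl⟩ := Nat.exists_eq_add_of_le hN
  refine ⟨(-1) ^ (g.natDegree * k), (isUnit_one.neg).pow _, ?_⟩
  rw [resultant_add_left_deg _ _ _ _ _ le_rfl, coeff_natDegree, hg.leadingCoeff]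
  simp

theorem resultant_of_congr (G g u w : ℤ[X]) (r : ℤ) (hg : g.Monic)
    (hG : G = C r * u + g * w) (hu : IsCoprime u g) :
    resultant G g = r ^ g.natDegree ∨ resultant G g = - r ^ g.natDegree := by
  set N := G.natDegree + u.natDegree + w.natDegree + g.natDegree with hN
  obtain ⟨e, he, h1⟩ := resultant_deg_sign G g hg N (by omega)
  obtain ⟨e', he', h2⟩ := resultant_deg_sign u g hg N (by omega)
  have h3 : resultant G g N g.natDegree = r ^ g.natDegree * resultant u g N g.natDegree := by
    rw [← resultant_C_mul_left, hG]
    exact resultant_add_mul_left _ _ _ _ _ (by omega) le_rfl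
  have h4 : IsUnit (resultant u g) := by
    rw [resultant_comm]
    exact ((isUnit_one.neg).pow _).mul ((isUnit_resultant_iff_isCoprime hg).2 hu.symm)
  rw [h1, h2] at h3
  rcases Int.isUnit_iff.1 he with rfl | rfl <;> rcases Int.isUnit_iff.1 he' with rfl | rfl <;>
    rcases Int.isUnit_iff.1 h4 with h | h <;> rw [h] at h3 <;> first | (left; linarith) | (right; linarith)

section crit

variable {d : ℕ}

theorem crit_add_of_zero {S : Type*} [CommRing S] (φ : ℤ[X] →+* S) {g : ℕ}
    (h : φ (critPoly d g) = 0) (i : ℕ) : φ (critPoly d (i + g)) = φ (critPoly d i) := by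
  induction i with
  | zero => simp [critPoly, h]
  | succ i ih =>
    rw [show i + 1 + g = (i + g) + 1 by omega]
    simp only [critPoly, map_add, map_pow, ih]

theorem crit_add_of_sq_zero (hd : 2 ≤ d) {S : Type*} [CommRing S] (φ : ℤ[X] →+* S) {g : ℕ}
    (h : φ (critPoly d g) ^ 2 = 0) (i : ℕ) :
    φ (critPoly d (i + 1 + g)) = φ (critPoly d (i + 1)) := by
  induction i with
  | zero =>
    rw [show 0 + 1 + g = g + 1 by omega]
    have : d ≠ 0 := by omega
    simp [critPoly, pow_eq_zero_of_le hd h, this]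
  | succ i ih =>
    rw [show i + 1 + 1 + g = (i + 1 + g) + 1 by omega, critPoly, critPoly.eq_2 d (i+1)]
    simp only [map_add, map_pow, ih]

theorem crit_mul_of_zero {S : Type*} [CommRing S] (φ : ℤ[X] →+* S) {g : ℕ}
    (h : φ (critPoly d g) = 0) (l : ℕ) : φ (critPoly d (g * l)) = 0 := by
  induction l with
  | zero => simp [critPoly]
  | succ l ih => rw [mul_add, mul_one, crit_add_of_zero φ h, ih]

theorem crit_add_mul_of_zero {S : Type*} [CommRing S] (φ : ℤ[X] →+* S) {g : ℕ}
    (h : φ (critPoly d g) = 0) (i l : ℕ) :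
    φ (critPoly d (i + g * l)) = φ (critPoly d i) :=
  crit_add_of_zero φ (crit_mul_of_zero φ h l) i

theorem crit_gcd_of_zero {S : Type*} [CommRing S] (φ : ℤ[X] →+* S) (a b : ℕ) :
    φ (critPoly d a) = 0 → φ (critPoly d b) = 0 → φ (critPoly d (Nat.gcd a b)) = 0 := by
  induction a, b using Nat.gcd.induction with
  | H0 n => intro _ h; simpa using h
  | H1 m n hm ih =>
    intro h1 h2
    rw [Nat.gcd_rec]
    refine ih ?_ h1
    rw [← crit_add_mul_of_zero φ h1 (n % m) (n / m), Nat.mod_add_div]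
    exact h2

theorem crit_dvd (g l : ℕ) : critPoly d g ∣ critPoly d (g * l) := by
  rw [← Ideal.Quotient.eq_zero_iff_dvd]
  apply crit_mul_of_zero
  rw [Ideal.Quotient.eq_zero_iff_dvd]

theorem crit_mul_eq (hd : 2 ≤ d) (g l : ℕ) (hl : 1 ≤ l) :
    ∃ q, critPoly d (g * l) = critPoly d g * (1 + critPoly d g * q) := by
  have key : Ideal.Quotient.mk (Ideal.span {critPoly d g ^ 2}) (critPoly d (g * l)) =
      Ideal.Quotient.mk (Ideal.span {critPoly d g ^ 2}) (critPoly d g) := by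
    have h0 : (Ideal.Quotient.mk (Ideal.span {critPoly d g ^ 2}) (critPoly d g)) ^ 2 = 0 := by
      rw [← map_pow, Ideal.Quotient.eq_zero_iff_dvd]
    rcases Nat.eq_zero_or_pos g with rfl | hg
    · simp
    induction l, hl using Nat.le_induction with
    | base => simp
    | succ l hl ih =>
      have : 1 ≤ g * l := Nat.mul_pos hg hl
      obtain ⟨i, hi⟩ := Nat.exists_eq_add_of_le' this
      rw [mul_add, mul_one, hi, crit_add_of_sq_zero hd _ h0, ← hi, ih]
  rw [Ideal.Quotient.eq, Ideal.mem_span_singleton] at key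
  obtain ⟨q, hq⟩ := key
  exact ⟨q, by linear_combination hq⟩

theorem crit_gcd_mem (a b : ℕ) :
    ∃ x y, critPoly d (Nat.gcd a b) = x * critPoly d a + y * critPoly d b := by
  have h := crit_gcd_of_zero (d := d)
    (Ideal.Quotient.mk (Ideal.span {critPoly d a, critPoly d b})) a b
    (Ideal.Quotient.eq_zero_iff_mem.2 (Ideal.subset_span (by simp)))
    (Ideal.Quotient.eq_zero_iff_mem.2 (Ideal.subset_span (by simp)))
  rw [Ideal.Quotient.eq_zero_iff_mem, Ideal.mem_span_pair] at h
  obtain ⟨x, y, h⟩ := h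
  exact ⟨x, y, h.symm⟩

theorem crit_eval_lt (hd : 2 ≤ d) (i : ℕ) :
    0 ≤ (critPoly d i).eval 1 ∧ (critPoly d i).eval 1 < (critPoly d (i + 1)).eval 1 := by
  have main : 0 ≤ (critPoly d i).eval 1 := by
    induction i with
    | zero => simp [critPoly]
    | succ i ih => simp only [critPoly, eval_add, eval_pow, eval_X]; positivity
  refine ⟨main, ?_⟩
  simp only [critPoly, eval_add, eval_pow, eval_X]
  have : (critPoly d i).eval 1 ≤ (critPoly d i).eval 1 ^ d := by
    rcases main.eq_or_lt with h | h
    · rw [← h]; positivity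
    · exact le_self_pow₀ h (by omega)
  linarith

theorem crit_injective (hd : 2 ≤ d) : Function.Injective (critPoly d) := by
  have : StrictMono (fun i => (critPoly d i).eval 1) :=
    strictMono_nat_of_lt_succ fun i => (crit_eval_lt hd i).2
  intro i j h
  exact this.injective (by simp [h])

theorem crit_ne_zero (hd : 2 ≤ d) {i : ℕ} (hi : 1 ≤ i) : critPoly d i ≠ 0 := by
  intro h
  have := crit_injective hd (a₁ := i) (a₂ := 0) (by simpa [critPoly] using h)
  omega

theorem crit_monic (hd : 2 ≤ d) {i : ℕ} (hi : 1 ≤ i) :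
    (critPoly d i).Monic ∧ 1 ≤ (critPoly d i).natDegree := by
  induction i, hi using Nat.le_induction with
  | base =>
    have : d ≠ 0 := by omega
    simp [critPoly, this, monic_X]
  | succ i hi ih =>
    have hm := ih.1.pow d
    have hdeg : 2 ≤ (critPoly d i ^ d).natDegree := by
      rw [ih.1.natDegree_pow]; nlinarith [ih.2]
    have hlt : (X : ℤ[X]).degree < (critPoly d i ^ d).degree := by
      rw [degree_eq_natDegree hm.ne_zero, degree_X]
      exact_mod_cast hdeg
    refine ⟨hm.add_of_left hlt, ?_⟩
    rw [critPoly, natDegree_add_eq_left_of_degree_lt hlt]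
    omega

end crit

section phi

variable {d : ℕ}

theorem toRF_inj {p q : ℤ[X]} (h : toRF p = toRF q) : p = q :=
  IsFractionRing.injective (ℤ[X]) RF h

theorem toRF_mul (p q : ℤ[X]) : toRF (p * q) = toRF p * toRF q := map_mul _ _ _
theorem toRF_sub (p q : ℤ[X]) : toRF (p - q) = toRF p - toRF q := map_sub _ _ _
theorem toRF_pow (p : ℤ[X]) (n : ℕ) : toRF (p ^ n) = toRF p ^ n := map_pow _ _ _
theorem toRF_one : toRF 1 = 1 := map_one _
theorem toRF_zero : toRF 0 = 0 := map_zero _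
theorem toRF_prod {ι : Type*} (s : Finset ι) (f : ι → ℤ[X]) :
    toRF (∏ i ∈ s, f i) = ∏ i ∈ s, toRF (f i) := map_prod _ _ _

theorem toRF_ne_zero {p : ℤ[X]} (h : p ≠ 0) : toRF p ≠ 0 := fun h' =>
  h (toRF_inj (h'.trans toRF_zero.symm))

theorem G0Rat_ne_zero (hd : 2 ≤ d) {n : ℕ} (_hn : 0 < n) : G0Rat d n ≠ 0 := by
  unfold G0Rat
  refine Finset.prod_ne_zero_iff.2 fun k hk => zpow_ne_zero _ (toRF_ne_zero (crit_ne_zero hd ?_))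
  exact Nat.pos_of_mem_divisors hk

theorem prod_G0Rat (hd : 2 ≤ d) {n : ℕ} (hn : 0 < n) :
    ∏ j ∈ n.divisors, G0Rat d j = toRF (critPoly d n) := by
  refine (ArithmeticFunction.prod_eq_iff_prod_pow_moebius_eq_of_nonzero
    (f := G0Rat d) (g := fun n => toRF (critPoly d n))
    (fun n hn => G0Rat_ne_zero hd hn) (fun n hn => toRF_ne_zero (crit_ne_zero hd hn))).2 ?_ n hn
  intro n hn
  rw [Nat.prod_divisorsAntidiagonal'
    (fun a b => toRF (critPoly d b) ^ ArithmeticFunction.moebius a)]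
  rfl

open Classical in
/-- the polynomial `G_{d,0,k}` (junk value `0` if it did not exist) -/
def Phi (d k : ℕ) : ℤ[X] := if h : ∃ p, toRF p = G0Rat d k then h.choose else 0

theorem Phi_spec_of {k : ℕ} (h : ∃ p, toRF p = G0Rat d k) : toRF (Phi d k) = G0Rat d k := by
  unfold Phi
  rw [dif_pos h]
  exact h.choose_spec

theorem prod_Phi_of (hd : 2 ≤ d) {n : ℕ} (hn : 0 < n)
    (H : ∀ j ≤ n, 0 < j → toRF (Phi d j) = G0Rat d j) :
    ∏ j ∈ n.divisors, Phi d j = critPoly d n := by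
  apply toRF_inj
  rw [toRF_prod, ← prod_G0Rat hd hn]
  exact Finset.prod_congr rfl fun j hj =>
    H j (Nat.divisor_le hj) (Nat.pos_of_mem_divisors hj)

/-- key relation -/
theorem Phi_mul_of (hd : 2 ≤ d) {n g : ℕ} (hn : 0 < n)
    (H : ∀ j ≤ n, 0 < j → toRF (Phi d j) = G0Rat d j) (hg : g ∣ n) (hgn : g ≠ n) :
    ∃ z q, Phi d n * z = 1 + critPoly d g * q := by
  have hg0 : 0 < g := Nat.pos_of_dvd_of_pos hg hn
  have hle : g ≤ n := Nat.le_of_dvd hn hg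
  have h1 := prod_Phi_of hd hn H
  have h2 := prod_Phi_of hd hg0 (fun j hj => H j (hj.trans hle))
  have hsub : insert n g.divisors ⊆ n.divisors := by
    intro x hx
    rcases Finset.mem_insert.1 hx with rfl | hx
    · exact Nat.mem_divisors_self _ hn.ne'
    · exact Nat.mem_divisors.2 ⟨(Nat.dvd_of_mem_divisors hx).trans hg, hn.ne'⟩
  have hnot : n ∉ g.divisors := by
    intro h
    exact hgn (Nat.dvd_antisymm hg (Nat.dvd_of_mem_divisors h))
  have h3 := Finset.prod_dvd_prod_of_subset _ _ (Phi d) hsub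
  rw [Finset.prod_insert hnot, h1, h2] at h3
  obtain ⟨z, hz⟩ := h3
  obtain ⟨l, rfl⟩ := hg
  have hl : 1 ≤ l := Nat.pos_of_ne_zero (by rintro rfl; simp at hn)
  obtain ⟨q, hq⟩ := crit_mul_eq hd g l hl
  refine ⟨z, q, mul_left_cancel₀ (crit_ne_zero hd hg0) ?_⟩
  rw [← hq, hz]; ring

theorem Phi_coprime_of (hd : 2 ≤ d) {a b : ℕ} (ha : 0 < a) (hb : 0 < b) (hab : a ≠ b)
    (Ha : ∀ j ≤ a, 0 < j → toRF (Phi d j) = G0Rat d j)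
    (Hb : ∀ j ≤ b, 0 < j → toRF (Phi d j) = G0Rat d j) :
    IsCoprime (Phi d a) (Phi d b) := by
  have hda : Phi d a ∣ critPoly d a := by
    rw [← prod_Phi_of hd ha Ha]
    exact Finset.dvd_prod_of_mem _ (Nat.mem_divisors_self _ ha.ne')
  have hdb : Phi d b ∣ critPoly d b := by
    rw [← prod_Phi_of hd hb Hb]
    exact Finset.dvd_prod_of_mem _ (Nat.mem_divisors_self _ hb.ne')
  obtain ⟨s, hs⟩ := hda
  obtain ⟨t, ht⟩ := hdb
  obtain ⟨x, y, hxy⟩ := crit_gcd_mem (d := d) a b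
  rw [hs, ht] at hxy
  by_cases h : Nat.gcd a b = a
  · have h' : Nat.gcd a b ≠ b := fun h' => hab (h.symm.trans h')
    obtain ⟨z, q, hz⟩ := Phi_mul_of hd hb Hb (Nat.gcd_dvd_right a b) h'
    refine ⟨-(x * s * q), z - y * t * q, ?_⟩
    rw [hxy] at hz
    linear_combination hz
  · obtain ⟨z, q, hz⟩ := Phi_mul_of hd ha Ha (Nat.gcd_dvd_left a b) h
    refine ⟨z - x * s * q, -(y * t * q), ?_⟩
    rw [hxy] at hz
    linear_combination hz

theorem Phi_spec (hd : 2 ≤ d) (k : ℕ) (hk : 0 < k) : toRF (Phi d k) = G0Rat d k := by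
  induction k using Nat.strong_induction_on with
  | _ k ih =>
    apply Phi_spec_of
    have hlt : ∀ j ∈ k.properDivisors, 0 < j ∧ j < k := fun j hj =>
      ⟨Nat.pos_of_mem_properDivisors hj, (Nat.mem_properDivisors.1 hj).2⟩
    have hdvd : ∏ j ∈ k.properDivisors, Phi d j ∣ critPoly d k := by
      apply Finset.prod_dvd_of_coprime
      · intro i hi j hj hij
        have hi' := hlt i hi
        have hj' := hlt j hj
        exact Phi_coprime_of hd hi'.1 hj'.1 hij
          (fun l hl hl0 => ih l (by omega) hl0) (fun l hl hl0 => ih l (by omega) hl0)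
      · intro j hj
        have hj' := hlt j hj
        have h1 : Phi d j ∣ critPoly d j := by
          rw [← prod_Phi_of hd hj'.1 (fun l hl hl0 => ih l (by omega) hl0)]
          exact Finset.dvd_prod_of_mem _ (Nat.mem_divisors_self _ hj'.1.ne')
        obtain ⟨l, hl⟩ := (Nat.mem_properDivisors.1 hj).1
        rw [hl]
        exact h1.trans (crit_dvd j l)
    obtain ⟨q, hq⟩ := hdvd
    refine ⟨q, ?_⟩
    have h1 := prod_G0Rat hd hk
    rw [hq, toRF_mul, ← Nat.cons_self_properDivisors hk.ne', Finset.prod_cons, toRF_prod,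
      mul_comm] at h1
    have h2 : ∏ j ∈ k.properDivisors, toRF (Phi d j) = ∏ j ∈ k.properDivisors, G0Rat d j :=
      Finset.prod_congr rfl fun j hj => ih j (hlt j hj).2 (hlt j hj).1
    rw [h2] at h1
    refine (mul_left_cancel₀ ?_ h1).symm
    exact Finset.prod_ne_zero_iff.2 fun j hj => G0Rat_ne_zero hd (hlt j hj).1

theorem prod_Phi (hd : 2 ≤ d) {n : ℕ} (hn : 0 < n) :
    ∏ j ∈ n.divisors, Phi d j = critPoly d n :=
  prod_Phi_of hd hn fun j _ hj => Phi_spec hd j hj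

theorem Phi_coprime (hd : 2 ≤ d) {a b : ℕ} (ha : 0 < a) (hb : 0 < b) (hab : a ≠ b) :
    IsCoprime (Phi d a) (Phi d b) :=
  Phi_coprime_of hd ha hb hab (fun j _ hj => Phi_spec hd j hj) fun j _ hj => Phi_spec hd j hj

theorem Phi_monic (hd : 2 ≤ d) (k : ℕ) (hk : 0 < k) : (Phi d k).Monic := by
  induction k using Nat.strong_induction_on with
  | _ k ih =>
    have h1 := prod_Phi hd hk
    rw [← Nat.cons_self_properDivisors hk.ne', Finset.prod_cons, mul_comm] at h1
    have hm : (∏ j ∈ k.properDivisors, Phi d j).Monic :=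
      monic_prod_of_monic _ _ fun j hj =>
        ih j (Nat.mem_properDivisors.1 hj).2 (Nat.pos_of_mem_properDivisors hj)
    refine hm.of_mul_monic_left ?_
    rw [h1]
    exact (crit_monic hd hk).1

theorem Phi_ne_zero (hd : 2 ≤ d) {k : ℕ} (hk : 0 < k) : Phi d k ≠ 0 := (Phi_monic hd k hk).ne_zero

end phi

section quot

variable {d k : ℕ}

/-- reduction modulo `G_{d,0,k}` -/
abbrev red (d k : ℕ) : ℤ[X] →+* ℤ[X] ⧸ Ideal.span {Phi d k} := Ideal.Quotient.mk _

theorem red_Phi : red d k (Phi d k) = 0 := by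
  rw [Ideal.Quotient.eq_zero_iff_dvd]

theorem isUnit_red_iff (s : ℤ[X]) : IsUnit (red d k s) ↔ IsCoprime s (Phi d k) := by
  constructor
  · intro h
    obtain ⟨v, hv⟩ := h.exists_right_inv
    obtain ⟨v, rfl⟩ := Ideal.Quotient.mk_surjective v
    rw [← map_mul, ← map_one (red d k), Ideal.Quotient.eq, Ideal.mem_span_singleton] at hv
    obtain ⟨q, hq⟩ := hv
    exact ⟨v, -q, by linear_combination hq⟩
  · rintro ⟨a, b, h⟩
    have := congrArg (red d k) h
    rw [map_add, map_mul, map_mul, red_Phi, mul_zero, add_zero, map_one] at this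
    exact IsUnit.of_mul_eq_one_right _ this

theorem red_crit_self (hd : 2 ≤ d) (hk : 0 < k) : red d k (critPoly d k) = 0 := by
  rw [Ideal.Quotient.eq_zero_iff_dvd, ← prod_Phi hd hk]
  exact Finset.dvd_prod_of_mem _ (Nat.mem_divisors_self _ hk.ne')

theorem red_crit_unit (hd : 2 ≤ d) (hk : 0 < k) {i : ℕ} (hi : ¬ k ∣ i) :
    IsUnit (red d k (critPoly d i)) := by
  have hg : Nat.gcd i k ≠ k := fun h => hi (Nat.gcd_eq_right_iff_dvd.1 h)
  obtain ⟨z, q, hz⟩ := Phi_mul_of hd hk (fun j _ hj => Phi_spec hd j hj)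
    (Nat.gcd_dvd_right i k) hg
  obtain ⟨x, y, hxy⟩ := crit_gcd_mem (d := d) i k
  have h1 := congrArg (red d k) hz
  have h2 := congrArg (red d k) hxy
  simp only [map_add, map_mul, red_Phi, red_crit_self hd hk, map_one, mul_zero, zero_mul,
    add_zero] at h1 h2
  rw [h2] at h1
  refine IsUnit.of_mul_eq_one (- (red d k x * red d k q)) ?_
  linear_combination h1

theorem crit_sub_dvd (s t r : ℕ) :
    critPoly d s - critPoly d t ∣ critPoly d (s + r) - critPoly d (t + r) := by
  induction r with
  | zero => simp
  | succ r ih =>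
    refine ih.trans ?_
    rw [← add_assoc, ← add_assoc, critPoly, critPoly, add_sub_add_right_eq_sub]
    exact sub_dvd_pow_sub_pow _ _ _

theorem red_sub_unit (hd : 2 ≤ d) (hk : 0 < k) {t j : ℕ} (hj : ¬ k ∣ j) :
    IsUnit (red d k (critPoly d (t + j) - critPoly d t)) := by
  have hr : t + t * (k - 1) = k * t := by
    obtain ⟨k, rfl⟩ := Nat.exists_eq_add_of_le' hk
    simp; ring
  have h := map_dvd (red d k) (crit_sub_dvd (d := d) (t + j) t (t * (k - 1)))
  refine isUnit_of_dvd_unit h ?_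
  rw [hr, map_sub, crit_mul_of_zero _ (red_crit_self hd hk), sub_zero]
  apply red_crit_unit hd hk
  rw [show t + j + t * (k - 1) = j + k * t by omega]
  rwa [Nat.dvd_add_left (Dvd.intro _ rfl)]

theorem crit_eq_Phi_mul (hd : 2 ≤ d) (hk : 0 < k) :
    ∃ b, critPoly d k = Phi d k * b ∧ IsUnit (red d k b) := by
  refine ⟨∏ j ∈ k.properDivisors, Phi d j, ?_, ?_⟩
  · rw [← prod_Phi hd hk, ← Nat.cons_self_properDivisors hk.ne', Finset.prod_cons]
  · rw [isUnit_red_iff]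
    apply IsCoprime.prod_left
    intro j hj
    exact Phi_coprime hd (Nat.pos_of_mem_properDivisors hj) hk
      (Nat.mem_properDivisors.1 hj).2.ne

theorem red_d_cancel (hd : d.Prime) (hk : 0 < k) {x : ℤ[X] ⧸ Ideal.span {Phi d k}}
    (h : (d : ℤ[X] ⧸ Ideal.span {Phi d k}) * x = 0) : x = 0 := by
  obtain ⟨q, rfl⟩ := Ideal.Quotient.mk_surjective x
  have h' : red d k (C (d : ℤ) * q) = 0 := by simpa using h
  rw [Ideal.Quotient.eq_zero_iff_dvd] at h'
  rw [Ideal.Quotient.eq_zero_iff_dvd]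
  obtain ⟨w, hw⟩ := h'
  have hp : Prime (C (d : ℤ)) := prime_C_iff.2 (Nat.prime_iff_prime_int.1 hd)
  rcases hp.dvd_or_dvd ((Dvd.intro _ hw) : C (d : ℤ) ∣ Phi d k * w) with h1 | ⟨w', rfl⟩
  · exfalso
    have := C_dvd_iff_dvd_coeff _ _ |>.1 h1 (Phi d k).natDegree
    rw [coeff_natDegree, (Phi_monic hd.two_le k hk).leadingCoeff] at this
    have := Int.natCast_dvd_natCast.1 (by exact_mod_cast this : (d : ℤ) ∣ ((1 : ℕ) : ℤ))
    exact hd.one_lt.ne' (Nat.dvd_one.1 this)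
  · refine ⟨w', mul_left_cancel₀ hp.ne_zero ?_⟩
    rw [hw]; ring

theorem red_d_pow_cancel (hd : d.Prime) (hk : 0 < k) (j : ℕ) {x : ℤ[X] ⧸ Ideal.span {Phi d k}}
    (h : (d : ℤ[X] ⧸ Ideal.span {Phi d k}) ^ j * x = 0) : x = 0 := by
  induction j with
  | zero => simpa using h
  | succ j ih => rw [pow_succ', mul_assoc] at h; exact ih (red_d_cancel hd hk h)

end quot

section weight

variable {d k : ℕ}

/-- `s` is congruent to `d^e` times a unit modulo `G_{d,0,k}` -/
def PW (d k : ℕ) (s : ℤ[X]) (e : ℕ) : Prop :=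
  s ≠ 0 ∧ ∃ u, IsUnit u ∧ red d k s = (d : ℤ[X] ⧸ Ideal.span {Phi d k}) ^ e * u

theorem PW.mul {s t : ℤ[X]} {e f : ℕ} (hs : PW d k s e) (ht : PW d k t f) :
    PW d k (s * t) (e + f) := by
  obtain ⟨hs0, u, hu, h1⟩ := hs
  obtain ⟨ht0, v, hv, h2⟩ := ht
  exact ⟨mul_ne_zero hs0 ht0, u * v, hu.mul hv, by rw [map_mul, h1, h2]; ring⟩

theorem PW_of_unit {s : ℤ[X]} (h0 : s ≠ 0) (h : IsUnit (red d k s)) : PW d k s 0 :=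
  ⟨h0, _, h, by simp⟩

theorem PW_one : PW d k 1 0 := PW_of_unit one_ne_zero (by simp)

/-- `x` is a rational function of `d`-weight `e` and `G_{d,0,k}`-order `p` -/
def WW (d k : ℕ) (x : RF) (e p : ℤ) : Prop :=
  ∃ s t i j, PW d k s i ∧ PW d k t j ∧ x * toRF t = toRF s * toRF (Phi d k) ^ p ∧ e = i - j

theorem WW_one : WW d k 1 0 0 := ⟨1, 1, 0, 0, PW_one, PW_one, by simp, by simp⟩

theorem WW.mul (hd : 2 ≤ d) (hk : 0 < k) {x y : RF} {e f p q : ℤ}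
    (hx : WW d k x e p) (hy : WW d k y f q) : WW d k (x * y) (e + f) (p + q) := by
  obtain ⟨s, t, i, j, hs, ht, h, rfl⟩ := hx
  obtain ⟨s', t', i', j', hs', ht', h', rfl⟩ := hy
  refine ⟨s * s', t * t', i + i', j + j', hs.mul hs', ht.mul ht', ?_, by push_cast; ring⟩
  rw [zpow_add₀ (toRF_ne_zero (Phi_ne_zero hd hk)), toRF_mul, toRF_mul]
  linear_combination (y * toRF t') * h + (toRF s * toRF (Phi d k) ^ p) * h'

theorem WW.inv (hd : 2 ≤ d) (hk : 0 < k) {x : RF} {e p : ℤ}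
    (hx : WW d k x e p) : WW d k x⁻¹ (-e) (-p) := by
  obtain ⟨s, t, i, j, hs, ht, h, rfl⟩ := hx
  refine ⟨t, s, j, i, ht, hs, ?_, by ring⟩
  have hP := zpow_ne_zero p (toRF_ne_zero (Phi_ne_zero hd hk))
  have hs0 := toRF_ne_zero hs.1
  have ht0 := toRF_ne_zero ht.1
  have hx0 : x ≠ 0 := by
    rintro rfl
    rw [zero_mul] at h
    exact mul_ne_zero hs0 hP h.symm
  rw [zpow_neg]
  field_simp
  rw [← h, mul_comm]

theorem WW.npow (hd : 2 ≤ d) (hk : 0 < k) {x : RF} {e p : ℤ}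
    (hx : WW d k x e p) (n : ℕ) : WW d k (x ^ n) (n * e) (n * p) := by
  induction n with
  | zero => simpa using WW_one
  | succ n ih =>
    have := ih.mul hd hk hx
    rw [pow_succ]
    convert this using 1 <;> push_cast <;> ring

theorem WW.zpow (hd : 2 ≤ d) (hk : 0 < k) {x : RF} {e p : ℤ}
    (hx : WW d k x e p) (n : ℤ) : WW d k (x ^ n) (n * e) (n * p) := by
  obtain ⟨n, rfl | rfl⟩ := n.eq_nat_or_neg
  · simpa using hx.npow hd hk n
  · have := (hx.npow hd hk n).inv hd hk
    simpa using this

theorem WW.prod (hd : 2 ≤ d) (hk : 0 < k) {ι : Type*} (S : Finset ι) (x : ι → RF) (e p : ι → ℤ)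
    (h : ∀ i ∈ S, WW d k (x i) (e i) (p i)) :
    WW d k (∏ i ∈ S, x i) (∑ i ∈ S, e i) (∑ i ∈ S, p i) := by
  classical
  induction S using Finset.induction_on with
  | empty => simpa using WW_one
  | insert a S ha ih =>
    rw [Finset.prod_insert ha, Finset.sum_insert ha, Finset.sum_insert ha]
    exact (h a (by simp)).mul hd hk (ih fun i hi => h i (by simp [hi]))

theorem WW_of_PW {s : ℤ[X]} {e : ℕ} (h : PW d k s e) : WW d k (toRF s) e 0 :=
  ⟨s, 1, e, 0, h, PW_one, by simp [toRF_one], by simp⟩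

theorem WW_poly (hd : d.Prime) (hk : 0 < k) {G : ℤ[X]} {e : ℕ} (h : WW d k (toRF G) e 0) :
    ∃ u w, G = C ((d : ℤ) ^ e) * u + Phi d k * w ∧ IsCoprime u (Phi d k) := by
  obtain ⟨s, t, i, j, ⟨_, u, hu, h1⟩, ⟨_, v, hv, h2⟩, h3, h4⟩ := h
  rw [zpow_zero, mul_one, ← toRF_mul] at h3
  have h5 := congrArg (red d k) (toRF_inj h3)
  have hi : i = j + e := by omega
  subst hi
  rw [map_mul, h1, h2] at h5
  obtain ⟨v', hv'⟩ := hv.exists_right_inv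
  have h6 : red d k G - (d : ℤ[X] ⧸ Ideal.span {Phi d k}) ^ e * (u * v') = 0 := by
    apply red_d_pow_cancel hd hk j
    linear_combination v' * h5 - (d : ℤ[X] ⧸ Ideal.span {Phi d k}) ^ j * red d k G * hv'
  have hvu : IsUnit v' := IsUnit.of_mul_eq_one_right _ hv'
  have huv := hu.mul hvu
  obtain ⟨u', hu'⟩ := Ideal.Quotient.mk_surjective (u * v')
  rw [← hu'] at huv h6
  have h7 : red d k (G - C ((d : ℤ) ^ e) * u') = 0 := by
    rw [← h6]; simp
  rw [Ideal.Quotient.eq_zero_iff_dvd] at h7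
  obtain ⟨w, hw⟩ := h7
  exact ⟨u', w, by linear_combination hw, (isUnit_red_iff _).1 huv⟩

theorem WW_factor (hd : 2 ≤ d) (hk : 0 < k) {M j : ℕ} (hM : 1 ≤ M) (hj : 1 ≤ j) :
    WW d k ((toRF (critPoly d (M + 1 + j)) - toRF (critPoly d (M + 1))) /
      (toRF (critPoly d (M + j)) - toRF (critPoly d M)))
      (if k ∣ j then 1 else 0) (((if k ∣ M then (d - 1 : ℕ) else 0 : ℕ) : ℤ) * (if k ∣ j then 1 else 0)) := by
  set H : ℤ[X] := ∑ i ∈ Finset.range d, critPoly d (M + j) ^ i * critPoly d M ^ (d - 1 - i) with hH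
  have hmul : H * (critPoly d (M + j) - critPoly d M) =
      critPoly d (M + 1 + j) - critPoly d (M + 1) := by
    rw [hH, (Commute.all _ _).geom_sum₂_mul, show M + 1 + j = M + j + 1 by omega, critPoly,
      critPoly.eq_2 d M]
    ring
  have hne : ∀ i, critPoly d (i + j) - critPoly d i ≠ 0 := by
    intro i h
    have := crit_injective hd (sub_eq_zero.1 h)
    omega
  have hH0 : H ≠ 0 := by
    intro h
    rw [h, zero_mul] at hmul
    exact hne _ hmul.symm
  have hx : (toRF (critPoly d (M + 1 + j)) - toRF (critPoly d (M + 1))) /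
      (toRF (critPoly d (M + j)) - toRF (critPoly d M)) = toRF H := by
    rw [← toRF_sub, ← toRF_sub, ← hmul, toRF_mul]
    exact mul_div_cancel_right₀ _ (toRF_ne_zero (hne M))
  rw [hx]
  by_cases hkj : k ∣ j
  · obtain ⟨l, rfl⟩ := hkj
    have hl : 1 ≤ l := Nat.pos_of_ne_zero (by rintro rfl; simp at hj)
    rw [if_pos (Dvd.intro _ rfl)]
    by_cases hkM : k ∣ M
    · rw [if_pos hkM]
      obtain ⟨r, rfl⟩ := hkM
      have hr : 1 ≤ r := Nat.pos_of_ne_zero (by rintro rfl; simp at hM)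
      obtain ⟨b, hb, hbu⟩ := crit_eq_Phi_mul hd hk
      obtain ⟨q1, h1⟩ := crit_mul_eq hd k (r + l) (by omega)
      obtain ⟨q2, h2⟩ := crit_mul_eq hd k r hr
      set T : ℤ[X] := ∑ i ∈ Finset.range d,
        (1 + critPoly d k * q1) ^ i * (1 + critPoly d k * q2) ^ (d - 1 - i) with hT
      have hHT : H = b ^ (d - 1) * T * Phi d k ^ (d - 1) := by
        have : H = critPoly d k ^ (d - 1) * T := by
          rw [hH, hT, Finset.mul_sum]
          refine Finset.sum_congr rfl fun i hi => ?_
          have hi' := Finset.mem_range.1 hi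
          rw [← mul_add, h1, h2, mul_pow, mul_pow]
          have : critPoly d k ^ (d - 1) = critPoly d k ^ i * critPoly d k ^ (d - 1 - i) := by
            rw [← pow_add]; congr 1; omega
          rw [this]; ring
        rw [this, hb, mul_pow]; ring
      have hTd : red d k T = d := by
        rw [hT, map_sum]
        simp [red_crit_self hd hk]
      refine ⟨b ^ (d - 1) * T, 1, 1, 0, ⟨?_, (red d k b) ^ (d - 1), hbu.pow _, ?_⟩, PW_one, ?_, by simp⟩
      · intro h; rw [h, zero_mul] at hHT; exact hH0 hHT
      · rw [map_mul, hTd, map_pow]; ring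
      · rw [mul_one, zpow_natCast, hHT, toRF_mul _ (Phi d k ^ _), toRF_pow (Phi d k), toRF_one, mul_one]
    · rw [if_neg hkM]
      have hp : PW d k H 1 := by
        refine ⟨hH0, (red d k (critPoly d M)) ^ (d - 1), (red_crit_unit hd hk hkM).pow _, ?_⟩
        rw [hH, map_sum]
        have : ∀ i ∈ Finset.range d, red d k (critPoly d (M + k * l) ^ i *
            critPoly d M ^ (d - 1 - i)) = red d k (critPoly d M) ^ (d - 1) := by
          intro i hi
          have hi' := Finset.mem_range.1 hi
          rw [map_mul, map_pow, map_pow, crit_add_mul_of_zero _ (red_crit_self hd hk), ← pow_add]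
          congr 1; omega
        rw [Finset.sum_congr rfl this]
        simp
      simpa using WW_of_PW hp
  · rw [if_neg hkj, mul_zero]
    have hu := red_sub_unit hd hk (t := M + 1) hkj
    rw [← hmul, map_mul] at hu
    have := WW_of_PW (PW_of_unit hH0 (isUnit_of_mul_isUnit_left hu))
    simpa using this

theorem sum_moebius_dvd (k : ℕ) (hk : 0 < k) (n : ℕ) (hn : 0 < n) :
    ∑ j ∈ n.divisors, ArithmeticFunction.moebius (n / j) * (if k ∣ j then (1 : ℤ) else 0) =
      if n = k then 1 else 0 := by
  have := (ArithmeticFunction.sum_eq_iff_sum_mul_moebius_eq (R := ℤ)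
    (f := fun n => if n = k then 1 else 0) (g := fun n => if k ∣ n then 1 else 0)).1 ?_ n hn
  · rw [← this, Nat.sum_divisorsAntidiagonal'
      (fun a b => Int.cast (R := ℤ) (ArithmeticFunction.moebius a) * (if k ∣ b then (1 : ℤ) else 0))]
    simp only [Int.cast_id]
  · intro n hn
    simp [Finset.sum_ite_eq', hn.ne']

theorem WW_F (hd : 2 ≤ d) (hk : 0 < k) {M n : ℕ} (hM : 1 ≤ M) (hn : 0 < n) :
    WW d k (FRat d (M + 1) n) (if n = k then 1 else 0)
      (((if k ∣ M then (d - 1 : ℕ) else 0 : ℕ) : ℤ) * (if n = k then 1 else 0)) := by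
  have := WW.prod hd hk n.divisors _ _ _ fun j hj =>
    (WW_factor hd hk hM (Nat.pos_of_mem_divisors hj)).zpow hd hk (ArithmeticFunction.moebius (n / j))
  rw [sum_moebius_dvd k hk n hn] at this
  have h2 : ∀ c : ℤ, ∑ j ∈ n.divisors, ArithmeticFunction.moebius (n / j) *
      (c * (if k ∣ j then (1 : ℤ) else 0)) = c * if n = k then 1 else 0 := by
    intro c
    rw [← sum_moebius_dvd k hk n hn, Finset.mul_sum]
    exact Finset.sum_congr rfl fun j _ => by ring
  rw [h2] at this
  simpa only [FRat, Nat.add_sub_cancel] using this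

theorem F_one (hd : 2 ≤ d) {n : ℕ} (hn : 0 < n) : FRat d 1 n = toRF (Phi d n) ^ (d - 1) := by
  rw [Phi_spec hd n hn, FRat, G0Rat, ← Finset.prod_pow]
  refine Finset.prod_congr rfl fun j hj => ?_
  have hj0 := toRF_ne_zero (crit_ne_zero hd (Nat.pos_of_mem_divisors hj))
  rw [← zpow_natCast, zpow_comm, zpow_natCast]
  congr 1
  have hd0 : d ≠ 0 := by omega
  have h1 : critPoly d (1 + j) - critPoly d 1 = critPoly d j ^ (d - 1) * critPoly d j := by
    rw [add_comm, critPoly, critPoly, critPoly, pow_sub_one_mul hd0]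
    simp [hd0]
  rw [← toRF_sub, ← toRF_sub, h1]
  simp only [Nat.sub_self, zero_add, critPoly, sub_zero]
  rw [toRF_mul, toRF_pow]
  exact mul_div_cancel_right₀ _ hj0

theorem WW_G (hd : 2 ≤ d) (hk : 0 < k) {M n : ℕ} (hM : 1 ≤ M) (hn : 0 < n) :
    WW d k (GRat d (M + 1) n) ((if n = k then 1 else 0 : ℕ) : ℤ) 0 := by
  have hF := WW_F hd hk hM hn
  unfold GRat
  rw [Nat.add_sub_cancel]
  by_cases hnM : n ∣ M
  · rw [if_pos hnM, F_one hd hn]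
    by_cases hnk : n = k
    · subst hnk
      have h1 : WW d n (toRF (Phi d n)) 0 1 :=
        ⟨1, 1, 0, 0, PW_one, PW_one, by simp [toRF_one], by simp⟩
      have := hF.mul hd hk ((h1.npow hd hk (d - 1)).inv hd hk)
      rw [div_eq_mul_inv]
      simpa [hnM] using this
    · have h1 := WW_of_PW (PW_of_unit (Phi_ne_zero hd hn)
        ((isUnit_red_iff (k := k) (Phi d n)).2 (Phi_coprime hd hn hk hnk)))
      have := hF.mul hd hk ((h1.npow hd hk (d - 1)).inv hd hk)
      rw [div_eq_mul_inv]
      simpa [hnk] using this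
  · rw [if_neg hnM]
    by_cases hnk : n = k
    · subst hnk
      simpa [hnM] using hF
    · simpa [hnk] using hF

end weight

/-- Let `d` be a prime, `m ≥ 2`, `n, k ≥ 1`. Then
`Res(G_{d,m,n}, G_{d,0,k}) = ±d^{deg G_{d,0,n}}` if `n = k`, and `= ±1` if `n ≠ k`. -/
theorem resultant_misiurewicz_G0 (d m n k : ℕ) (hd : d.Prime) (hm : 2 ≤ m)
    (hn : 1 ≤ n) (hk : 1 ≤ k)
    (G G0n G0k : Polynomial ℤ) (hG : IsMisiurewicz d m n G)
    (hG0n : IsG0 d n G0n) (hG0k : IsG0 d k G0k) :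
    (n = k →
      resultantZ G G0k = (d : ℤ) ^ G0n.natDegree ∨
        resultantZ G G0k = -(d : ℤ) ^ G0n.natDegree) ∧
    (n ≠ k → resultantZ G G0k = 1 ∨ resultantZ G G0k = -1) := by
  have e1 : G0n = Phi d n := toRF_inj (hG0n.trans (Phi_spec hd.two_le n hn).symm)
  have e2 : G0k = Phi d k := toRF_inj (hG0k.trans (Phi_spec hd.two_le k hk).symm)
  subst e1 e2
  obtain ⟨M, rfl⟩ := Nat.exists_eq_add_of_le' (show 1 ≤ m by omega)
  have hW := WW_G hd.two_le hk (M := M) (by omega) hn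
  rw [← show toRF G = GRat d (M + 1) n from hG] at hW
  obtain ⟨u, w, h1, h2⟩ := WW_poly hd hk hW
  have h3 := resultant_of_congr G _ u w _ (Phi_monic hd.two_le k hk) h1 h2
  rw [resultantZ_eq]
  constructor
  · rintro rfl
    simpa using h3
  · intro hnk
    simpa [hnk] using h3
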